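/- Let ℓ > 0, and for k ∈ ℕ₀ and m ∈ ℤ set ζ_{k,m} = −(2k+1) + 2πim/ℓ. Then: (i) the Hadamard double product P_F(s) = ∏_{k=0}^∞ ∏_{m=−∞}^∞ (1 − s/ζ_{k,m})² exp(2s/ζ_{k,m} + (s/ζ_{k,m})²) converges for every s ∈ ℂ and defines an entire function of order at most two, i.e., for every η > 0 there is a constant C > 0 such that |P_F(s)| ≤ C exp(|s|^{2+η}) for all s ∈ ℂ; and (ii) there exist complex constants a, b, c (depending only on ℓ) such that Z_F(s) = exp(a + bs + cs²) · P_F(s) for all s ∈ ℂ, where Z_F(s) = e^{−sℓ/4} ∏_{k=0}^∞ (1 − e^{−(s+2k+1)ℓ})². -/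

import Mathlib

/-- The resonances of the Dirichlet Laplacian on the hyperbolic funnel of boundary
length `ℓ`: `ζ_{k,m} = -(2k+1) + 2πim/ℓ` for `k ∈ ℕ₀`, `m ∈ ℤ`. -/
noncomputable def funnelResonance (ℓ : ℝ) (k : ℕ) (m : ℤ) : ℂ :=
  -(2 * (k : ℂ) + 1) + 2 * Real.pi * Complex.I * m / ℓ

/-- The genus-two canonical (Hadamard) product over the funnel resonance set, each point
taken with multiplicity two:
`P_F(s) = ∏_{k,m} (1 - s/ζ_{k,m})² exp(2s/ζ_{k,m} + (s/ζ_{k,m})²)`. -/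
noncomputable def funnelHadamard (ℓ : ℝ) (s : ℂ) : ℂ :=
  ∏' p : ℕ × ℤ, (1 - s / funnelResonance ℓ p.1 p.2) ^ 2 *
    Complex.exp (2 * s / funnelResonance ℓ p.1 p.2 + (s / funnelResonance ℓ p.1 p.2) ^ 2)

/-- The Selberg zeta function of the funnel of boundary length `ℓ`:
`Z_F(s) = e^{-sℓ/4} ∏_{k=0}^∞ (1 - e^{-(s+2k+1)ℓ})²`. -/
noncomputable def funnelZeta (ℓ : ℝ) (s : ℂ) : ℂ :=
  Complex.exp (-s * ℓ / 4) * ∏' k : ℕ, (1 - Complex.exp (-(s + 2 * k + 1) * ℓ)) ^ 2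

namespace FunnelAux
open Complex Filter Topology

lemma soft_conv (A B C : ℕ → ℂ) (h : ∀ s : ℂ, 0 ≤ s.re → ∃ w : ℂ, w ≠ 0 ∧
    Tendsto (fun n => exp (A n + B n * s + C n * s ^ 2)) atTop (𝓝 w)) :
    ∃ b c : ℂ, Tendsto B atTop (𝓝 b) ∧ Tendsto C atTop (𝓝 c) := by
  have key : ∀ s : ℂ, 0 ≤ s.re → ∃ r : ℝ,
      Tendsto (fun n => (A n + B n * s + C n * s ^ 2).re) atTop (𝓝 r) := by
    intro s hs
    obtain ⟨w, hw, hT⟩ := h s hs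
    refine ⟨Real.log ‖w‖, ?_⟩
    have := (hT.norm).log (by simpa using hw)
    simpa [Complex.norm_exp] using this
  obtain ⟨r0, h0⟩ := key 0 (by simp)
  obtain ⟨r1, h1⟩ := key 1 (by simp)
  obtain ⟨r2, h2⟩ := key 2 (by simp)
  obtain ⟨r3, h3⟩ := key I (by simp)
  obtain ⟨r4, h4⟩ := key (1 + I) (by simp)
  have e4 : (1 + I) ^ 2 = 2 * I := by
    have := I_sq
    linear_combination this
  rw [e4] at h4
  simp at h0 h1 h2 h3 h4
  norm_num at h2
  have e5 : ∀ z : ℂ, (z * 4).re = z.re * 4 := fun z => by simp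
  -- real and imaginary parts
  have hCre : Tendsto (fun n => (C n).re) atTop (𝓝 ((r2 - 2 * r1 + r0) / 2)) := by
    refine (((h2.sub (h1.const_mul 2)).add h0).div_const 2).congr fun n => ?_
    ring
  have hBre : Tendsto (fun n => (B n).re) atTop (𝓝 (r1 - r0 - (r2 - 2 * r1 + r0) / 2)) := by
    refine ((h1.sub h0).sub hCre).congr fun n => ?_
    ring
  have hBim : Tendsto (fun n => (B n).im) atTop (𝓝 (r0 - (r2 - 2 * r1 + r0) / 2 - r3)) := by
    refine ((h0.sub hCre).sub h3).congr fun n => ?_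
    ring
  have hCim := (((h0.add hBre).sub hBim).sub h4).div_const 2
  have hCim' : Tendsto (fun n => (C n).im) atTop (𝓝 _) := hCim.congr fun n => by ring
  have mk : ∀ (D : ℕ → ℂ) (x y : ℝ), Tendsto (fun n => (D n).re) atTop (𝓝 x) →
      Tendsto (fun n => (D n).im) atTop (𝓝 y) → Tendsto D atTop (𝓝 (x + y * I)) := by
    intro D x y hx hy
    have h1 := (Complex.continuous_ofReal.tendsto x).comp hx
    have h2 := (Complex.continuous_ofReal.tendsto y).comp hy
    exact (h1.add (h2.mul_const I)).congr fun n => by simp [Complex.re_add_im]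
  exact ⟨_, _, mk B _ _ hBre hBim, mk C _ _ hCre hCim'⟩

lemma soft_main (A B C : ℕ → ℂ) (g : ℕ → ℂ → ℂ) (G P : ℂ → ℂ)
    (hg : ∀ s, Tendsto (fun n => g n s) atTop (𝓝 (G s)))
    (hP : ∀ s, Tendsto (fun n => g n s * exp (A n + B n * s + C n * s ^ 2)) atTop (𝓝 (P s)))
    (hG0 : ∀ s : ℂ, 0 ≤ s.re → G s ≠ 0) (hP0 : ∀ s : ℂ, 0 ≤ s.re → P s ≠ 0) :
    ∃ a b c : ℂ, ∀ s, P s = G s * exp (a + b * s + c * s ^ 2) := by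
  have hq : ∀ s : ℂ, 0 ≤ s.re →
      Tendsto (fun n => exp (A n + B n * s + C n * s ^ 2)) atTop (𝓝 (P s / G s)) := by
    intro s hs
    refine ((hP s).div (hg s) (hG0 s hs)).congr' ?_
    filter_upwards [(hg s).eventually_ne (hG0 s hs)] with n hn
    simp [hn]
  obtain ⟨b, c, hb, hc⟩ := soft_conv A B C fun s hs =>
    ⟨_, div_ne_zero (hP0 s hs) (hG0 s hs), hq s hs⟩
  have h0 := hq 0 (by simp)
  have hne : P 0 / G 0 ≠ 0 := div_ne_zero (hP0 0 (by simp)) (hG0 0 (by simp))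
  refine ⟨log (P 0 / G 0), b, c, fun s => ?_⟩
  refine tendsto_nhds_unique (hP s) ?_
  have hE : Tendsto (fun n => exp (B n * s + C n * s ^ 2)) atTop (𝓝 (exp (b * s + c * s ^ 2))) :=
    ((hb.mul_const s).add (hc.mul_const _)).cexp
  refine ((hg s).mul (h0.mul hE)).congr' ?_ |>.trans_eq ?_
  · refine Eventually.of_forall fun n => ?_
    simp only [mul_zero, add_zero, ne_eq, OfNat.ofNat_ne_zero, not_false_eq_true, zero_pow, add_assoc, exp_add]
  · rw [add_assoc, exp_add (log _), exp_log hne]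

/-- The squared genus-two Weierstrass factor. -/
noncomputable def wfac (z : ℂ) : ℂ := (1 - z) ^ 2 * exp (2 * z + z ^ 2)

lemma wfac_sub_one (z : ℂ) (hz : ‖z‖ ≤ 1 / 2) : ‖wfac z - 1‖ ≤ 3 * ‖z‖ ^ 3 := by
  have h1 := Complex.norm_log_sub_logTaylor_le 2 (z := -z) (by rw [norm_neg]; linarith)
  have e1 : logTaylor (2 + 1) (-z) = -z - z ^ 2 / 2 := by
    simp [logTaylor_succ, logTaylor_zero]; ring
  rw [e1, norm_neg] at h1
  have hne : (1 + -z) ≠ 0 := by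
    intro h
    have : z = 1 := by linear_combination -h
    rw [this] at hz; norm_num at hz
  have e2 : wfac z = exp (2 * (log (1 + -z) - (-z - z ^ 2 / 2))) := by
    rw [wfac, show 2 * (log (1 + -z) - (-z - z ^ 2 / 2)) =
      log (1 + -z) + log (1 + -z) + (2 * z + z ^ 2) by ring, exp_add (log _ + log _), exp_add (log _), exp_log hne]
    ring
  have hinv : (1 - ‖z‖)⁻¹ ≤ 2 := by
    rw [inv_le_comm₀ (by linarith) (by norm_num)]; linarith
  have hz0 := norm_nonneg z
  have hz3 : ‖z‖ ^ 3 ≤ (1 / 2) ^ 3 := by gcongr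
  have h2 : ‖2 * (log (1 + -z) - (-z - z ^ 2 / 2))‖ ≤ 4 / 3 * ‖z‖ ^ 3 := by
    rw [norm_mul]
    have : ‖z‖ ^ 3 * (1 - ‖z‖)⁻¹ ≤ ‖z‖ ^ 3 * 2 := by gcongr
    norm_num at h1 ⊢
    linarith
  rw [e2]
  refine (Complex.norm_exp_sub_one_le (by linarith)).trans ?_
  nlinarith [pow_nonneg hz0 3]

lemma wfac_growth (p : ℝ) (hp : 2 ≤ p) (hp3 : p ≤ 3) (z : ℂ) :
    ‖wfac z‖ ≤ Real.exp (18 * ‖z‖ ^ p) := by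
  rcases le_total ‖z‖ (1 / 2) with hz | hz
  · have h1 := wfac_sub_one z hz
    have h2 : ‖wfac z‖ ≤ 1 + 3 * ‖z‖ ^ 3 := by
      calc ‖wfac z‖ = ‖1 + (wfac z - 1)‖ := by ring_nf
        _ ≤ ‖(1 : ℂ)‖ + ‖wfac z - 1‖ := norm_add_le _ _
        _ ≤ _ := by rw [norm_one]; linarith
    have h3 : ‖z‖ ^ 3 ≤ ‖z‖ ^ p := by
      rcases eq_or_lt_of_le (norm_nonneg z) with h0 | h0
      · rw [← h0, Real.zero_rpow (by linarith)]; simp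
      · have := Real.rpow_le_rpow_of_exponent_ge h0 (by linarith) hp3
        exact_mod_cast this
    have h4 := Real.add_one_le_exp (18 * ‖z‖ ^ p)
    have := pow_nonneg (norm_nonneg z) 3
    linarith
  · have h0 : 0 < ‖z‖ := by linarith
    have h1 : ‖1 - z‖ ≤ Real.exp ‖z‖ := by
      have := norm_sub_le (1 : ℂ) z
      rw [norm_one] at this
      linarith [Real.add_one_le_exp ‖z‖]
    have h2 : ‖exp (2 * z + z ^ 2)‖ ≤ Real.exp (2 * ‖z‖ + ‖z‖ ^ 2) := by
      refine (Complex.norm_exp_le_exp_norm _).trans (Real.exp_le_exp.2 ?_)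
      refine (norm_add_le _ _).trans ?_
      simp
    have h3 : ‖wfac z‖ ≤ Real.exp (4 * ‖z‖ + ‖z‖ ^ 2) := by
      rw [wfac, norm_mul, norm_pow]
      calc ‖1 - z‖ ^ 2 * ‖exp (2 * z + z ^ 2)‖
          ≤ Real.exp ‖z‖ ^ 2 * Real.exp (2 * ‖z‖ + ‖z‖ ^ 2) := by gcongr
        _ = _ := by rw [← Real.exp_nat_mul, ← Real.exp_add]; push_cast; ring_nf
    refine h3.trans (Real.exp_le_exp.2 ?_)
    have h4 : (1 / 2 : ℝ) ≤ ‖z‖ ^ (p - 2) := by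
      calc (1 / 2 : ℝ) = (1 / 2) ^ (1 : ℝ) := by simp
        _ ≤ (1 / 2) ^ (p - 2) :=
          Real.rpow_le_rpow_of_exponent_ge (by norm_num) (by norm_num) (by linarith)
        _ ≤ _ := Real.rpow_le_rpow (by norm_num) hz (by linarith)
    have h5 : ‖z‖ ^ p = ‖z‖ ^ (p - 2) * ‖z‖ ^ 2 := by
      rw [← Real.rpow_natCast ‖z‖ 2, ← Real.rpow_add h0]; norm_num
    rw [h5]
    nlinarith [sq_nonneg ‖z‖, mul_le_mul_of_nonneg_right h4 (sq_nonneg ‖z‖)]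

lemma reson_eq (ℓ : ℝ) (hl : 0 < ℓ) (k : ℕ) (m : ℤ) (s : ℂ) :
    funnelResonance ℓ k m - s =
      (2 * Real.pi * I / ℓ) * (m + I * (s + (2 * k + 1)) * ℓ / (2 * Real.pi)) := by
  have h1 : (ℓ : ℂ) ≠ 0 := by exact_mod_cast hl.ne'
  have h2 : (Real.pi : ℂ) ≠ 0 := by exact_mod_cast Real.pi_ne_zero
  rw [funnelResonance]
  field_simp
  linear_combination (-s - (2 * k + 1)) * ℓ * I_sq

lemma reson_re (ℓ : ℝ) (k : ℕ) (m : ℤ) : (funnelResonance ℓ k m).re = -(2 * k + 1) := by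
  have : funnelResonance ℓ k m = ((-(2 * k + 1) : ℝ) : ℂ) + ((2 * Real.pi * m / ℓ : ℝ) : ℂ) * I := by
    rw [funnelResonance]; push_cast; ring
  rw [this]; simp

lemma reson_ne (ℓ : ℝ) (k : ℕ) (m : ℤ) : funnelResonance ℓ k m ≠ 0 := by
  intro h
  have := reson_re ℓ k m
  rw [h] at this
  simp at this
  have h2 : (0 : ℝ) ≤ k := k.cast_nonneg
  linarith

lemma reson_ne_s (ℓ : ℝ) (k : ℕ) (m : ℤ) (s : ℂ) (hs : 0 ≤ s.re) :
    1 - s / funnelResonance ℓ k m ≠ 0 := by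
  intro h
  have h0 := reson_ne ℓ k m
  have : s = funnelResonance ℓ k m := by
    field_simp at h
    linear_combination -h
  rw [this, reson_re] at hs
  have h2 : (0 : ℝ) ≤ k := k.cast_nonneg
  linarith

lemma reson_summable (ℓ : ℝ) (hl : 0 < ℓ) (p : ℝ) (hp : 2 < p) :
    Summable fun q : ℕ × ℤ => ‖funnelResonance ℓ q.1 q.2‖ ^ (-p) := by
  have him : 0 < (I * ((ℓ / (2 * Real.pi) : ℝ) : ℂ)).im := by
    simp only [I_mul_im, ofReal_re]
    positivity
  set z : UpperHalfPlane := ⟨I * ((ℓ / (2 * Real.pi) : ℝ) : ℂ), him⟩ with hz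
  have hs := (EisensteinSeries.summable_one_div_norm_rpow hp).mul_left
    ((2 * Real.pi / ℓ) ^ (-p) * (EisensteinSeries.r z) ^ (-p))
  have hinj : Function.Injective (fun q : ℕ × ℤ => (![2 * (q.1 : ℤ) + 1, q.2] : Fin 2 → ℤ)) := by
    rintro ⟨a, b⟩ ⟨c, d⟩ h
    have h0 := congrFun h 0
    have h1 := congrFun h 1
    simp at h0 h1
    simp [h0, h1]
  refine (hs.comp_injective hinj).of_nonneg_of_le (fun q => by positivity) fun q => ?_
  have hb := EisensteinSeries.summand_bound z (k := p) (by linarith) ![2 * (q.1 : ℤ) + 1, q.2]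
  have he : funnelResonance ℓ q.1 q.2 = (2 * Real.pi * I / ℓ) *
      (((![2 * (q.1 : ℤ) + 1, q.2] : Fin 2 → ℤ) 0 : ℂ) * (z : ℂ) +
        ((![2 * (q.1 : ℤ) + 1, q.2] : Fin 2 → ℤ) 1 : ℂ)) := by
    have := reson_eq ℓ hl q.1 q.2 0
    have hzc : (z : ℂ) = I * ((ℓ / (2 * Real.pi) : ℝ) : ℂ) := rfl
    rw [sub_zero] at this
    rw [this, hzc]
    congr 1
    simp
    ring
  have hn : ‖(2 * Real.pi * I / ℓ : ℂ)‖ = 2 * Real.pi / ℓ := by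
    simp [abs_of_pos hl, abs_of_pos Real.pi_pos]
  rw [he, norm_mul, hn, Real.mul_rpow (by positivity) (norm_nonneg _)]
  simp only [Function.comp]
  rw [mul_assoc]
  exact mul_le_mul_of_nonneg_left hb (by positivity)

lemma reson_summable3 (ℓ : ℝ) (hl : 0 < ℓ) :
    Summable fun q : ℕ × ℤ => (‖funnelResonance ℓ q.1 q.2‖ ^ 3)⁻¹ := by
  refine (reson_summable ℓ hl 3 (by norm_num)).congr fun q => ?_
  rw [Real.rpow_neg (norm_nonneg _)]
  norm_cast

lemma wfac_local (ℓ : ℝ) (hl : 0 < ℓ) (R : ℝ) (hR : 0 < R) :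
    ∀ᶠ q : ℕ × ℤ in cofinite, ∀ s : ℂ, ‖s‖ ≤ R →
      ‖wfac (s / funnelResonance ℓ q.1 q.2) - 1‖ ≤
        3 * R ^ 3 * (‖funnelResonance ℓ q.1 q.2‖ ^ 3)⁻¹ := by
  have h := (reson_summable3 ℓ hl).tendsto_cofinite_zero
  have h2 : (0 : ℝ) < ((2 * R) ^ 3)⁻¹ := by positivity
  filter_upwards [h.eventually_lt_const h2] with q hq s hs
  have hpos : 0 < ‖funnelResonance ℓ q.1 q.2‖ := norm_pos_iff.2 (reson_ne ℓ q.1 q.2)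
  have h3 : 2 * R < ‖funnelResonance ℓ q.1 q.2‖ := by
    rw [inv_lt_inv₀ (by positivity) (by positivity)] at hq
    exact lt_of_pow_lt_pow_left₀ 3 hpos.le hq
  have h4 : ‖s / funnelResonance ℓ q.1 q.2‖ ≤ R / ‖funnelResonance ℓ q.1 q.2‖ := by
    rw [norm_div]; gcongr
  have h5 : R / ‖funnelResonance ℓ q.1 q.2‖ ≤ 1 / 2 := by
    rw [div_le_iff₀ hpos]; linarith
  refine (wfac_sub_one _ (h4.trans h5)).trans ?_
  calc 3 * ‖s / funnelResonance ℓ q.1 q.2‖ ^ 3 ≤ 3 * (R / ‖funnelResonance ℓ q.1 q.2‖) ^ 3 := by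
        gcongr
    _ = _ := by rw [div_pow]; ring

lemma wfac_summable (ℓ : ℝ) (hl : 0 < ℓ) (s : ℂ) :
    Summable fun q : ℕ × ℤ => ‖wfac (s / funnelResonance ℓ q.1 q.2) - 1‖ := by
  refine Summable.of_norm_bounded_eventually
    ((reson_summable3 ℓ hl).mul_left (3 * (‖s‖ + 1) ^ 3)) ?_
  filter_upwards [wfac_local ℓ hl (‖s‖ + 1) (by positivity)] with q hq
  rw [norm_norm]
  exact hq s (by linarith)

lemma had_eq (ℓ : ℝ) (s : ℂ) : (fun q : ℕ × ℤ =>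
        (1 - s / funnelResonance ℓ q.1 q.2) ^ 2 *
          Complex.exp (2 * s / funnelResonance ℓ q.1 q.2
            + (s / funnelResonance ℓ q.1 q.2) ^ 2)) =
    fun q => wfac (s / funnelResonance ℓ q.1 q.2) := by
  ext q
  rw [wfac, mul_div_assoc]

lemma had_mult (ℓ : ℝ) (hl : 0 < ℓ) (s : ℂ) :
    Multipliable fun q : ℕ × ℤ => wfac (s / funnelResonance ℓ q.1 q.2) := by
  simpa using multipliable_one_add_of_summable (wfac_summable ℓ hl s)

lemma had_eq' (ℓ : ℝ) (s : ℂ) :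
    funnelHadamard ℓ s = ∏' q : ℕ × ℤ, wfac (s / funnelResonance ℓ q.1 q.2) := by
  rw [funnelHadamard, had_eq]

lemma wfac_diff (ℓ : ℝ) (q : ℕ × ℤ) :
    Differentiable ℂ fun s : ℂ => wfac (s / funnelResonance ℓ q.1 q.2) := by
  unfold wfac
  fun_prop

lemma had_unif (ℓ : ℝ) (hl : 0 < ℓ) (R : ℝ) (hR : 0 < R) : TendstoLocallyUniformlyOn
      (fun (F : Finset (ℕ × ℤ)) (s : ℂ) => ∏ q ∈ F, wfac (s / funnelResonance ℓ q.1 q.2))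
      (fun s => ∏' q : ℕ × ℤ, wfac (s / funnelResonance ℓ q.1 q.2)) atTop
      (Metric.ball (0 : ℂ) R) := by
  have hb : ∀ᶠ q : ℕ × ℤ in cofinite, ∀ s ∈ Metric.ball (0 : ℂ) R,
      ‖wfac (s / funnelResonance ℓ q.1 q.2) - 1‖ ≤
        3 * R ^ 3 * (‖funnelResonance ℓ q.1 q.2‖ ^ 3)⁻¹ := by
    filter_upwards [wfac_local ℓ hl R hR] with q hq x hx
    exact hq x (mem_ball_zero_iff.1 hx).le
  have h := Summable.hasProdLocallyUniformlyOn_one_add (K := Metric.ball (0 : ℂ) R)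
    (f := fun (q : ℕ × ℤ) (s : ℂ) => wfac (s / funnelResonance ℓ q.1 q.2) - 1)
    Metric.isOpen_ball ((reson_summable3 ℓ hl).mul_left (3 * R ^ 3)) hb
    (fun q => ((wfac_diff ℓ q).sub_const 1).continuous.continuousOn)
  simp only [add_sub_cancel] at h
  exact hasProdLocallyUniformlyOn_iff_tendstoLocallyUniformlyOn.1 h

lemma had_analytic (ℓ : ℝ) (hl : 0 < ℓ) (s : ℂ) : AnalyticAt ℂ (funnelHadamard ℓ) s := by
  have hT := had_unif ℓ hl (‖s‖ + 1) (by positivity)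
  have hD : ∀ F : Finset (ℕ × ℤ), DifferentiableOn ℂ
      (fun s : ℂ => ∏ q ∈ F, wfac (s / funnelResonance ℓ q.1 q.2))
      (Metric.ball (0 : ℂ) (‖s‖ + 1)) :=
    fun F => DifferentiableOn.fun_finsetProd fun q _ => (wfac_diff ℓ q).differentiableOn
  have h2 := hT.differentiableOn (Eventually.of_forall hD) Metric.isOpen_ball
  have h3 : funnelHadamard ℓ = fun s => ∏' q : ℕ × ℤ, wfac (s / funnelResonance ℓ q.1 q.2) :=
    funext fun s => had_eq' ℓ s
  rw [h3]
  have hmem : s ∈ Metric.ball (0 : ℂ) (‖s‖ + 1) := by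
    rw [mem_ball_zero_iff]; linarith
  exact h2.analyticAt (Metric.isOpen_ball.mem_nhds hmem)

lemma had_growth (ℓ : ℝ) (hl : 0 < ℓ) (η : ℝ) (hη : 0 < η) : ∃ C : ℝ, 0 < C ∧
        ∀ s : ℂ, ‖funnelHadamard ℓ s‖ ≤ C * Real.exp (‖s‖ ^ (2 + η)) := by
  set p : ℝ := 2 + min η 1 / 2 with hp
  have hm : 0 < min η 1 := by positivity
  have hm1 : min η 1 ≤ 1 := min_le_right _ _
  have hm2 : min η 1 ≤ η := min_le_left _ _
  have hsum := reson_summable ℓ hl p (by linarith)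
  set T := ∑' q : ℕ × ℤ, ‖funnelResonance ℓ q.1 q.2‖ ^ (-p) with hT
  have hT0 : 0 ≤ T := tsum_nonneg fun q => by positivity
  have hb : ∀ s : ℂ, ‖funnelHadamard ℓ s‖ ≤ Real.exp (18 * T * ‖s‖ ^ p) := by
    intro s
    have ht := (had_mult ℓ hl s).hasProd
    rw [← had_eq'] at ht
    refine le_of_tendsto (Filter.Tendsto.norm ht) (Eventually.of_forall fun F => ?_)
    rw [norm_prod]
    calc ∏ q ∈ F, ‖wfac (s / funnelResonance ℓ q.1 q.2)‖
        ≤ ∏ q ∈ F, Real.exp (18 * ‖s / funnelResonance ℓ q.1 q.2‖ ^ p) :=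
          Finset.prod_le_prod (fun _ _ => norm_nonneg _)
            fun q _ => wfac_growth p (by linarith) (by linarith) _
      _ = Real.exp (18 * ‖s‖ ^ p * ∑ q ∈ F, ‖funnelResonance ℓ q.1 q.2‖ ^ (-p)) := by
          rw [← Real.exp_sum, Finset.mul_sum]
          congr 1
          refine Finset.sum_congr rfl fun q _ => ?_
          rw [norm_div, Real.div_rpow (norm_nonneg _) (norm_nonneg _), Real.rpow_neg (norm_nonneg _)]
          ring
      _ ≤ Real.exp (18 * ‖s‖ ^ p * T) := by
          gcongr
          exact hsum.sum_le_tsum F fun q _ => by positivity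
      _ = _ := by ring_nf
  have hev := (tendsto_rpow_atTop (show 0 < 2 + η - p by linarith)).eventually_ge_atTop (18 * T)
  obtain ⟨x0, hx0⟩ := eventually_atTop.1 hev
  refine ⟨Real.exp (18 * T * (max x0 1) ^ p), Real.exp_pos _, fun s => (hb s).trans ?_⟩
  rw [← Real.exp_add, Real.exp_le_exp]
  rcases le_total ‖s‖ (max x0 1) with h | h
  · have h1 : ‖s‖ ^ p ≤ (max x0 1) ^ p := Real.rpow_le_rpow (norm_nonneg _) h (by linarith)
    have h2 : 0 ≤ ‖s‖ ^ (2 + η) := by positivity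
    have := mul_le_mul_of_nonneg_left h1 (show 0 ≤ 18 * T by positivity)
    linarith
  · have h1 := hx0 ‖s‖ ((le_max_left _ _).trans h)
    have hs : 0 < ‖s‖ := lt_of_lt_of_le (by positivity) h
    have h2 : ‖s‖ ^ (2 + η) = ‖s‖ ^ (2 + η - p) * ‖s‖ ^ p := by
      rw [← Real.rpow_add hs]; ring_nf
    have h3 : 0 ≤ 18 * T * (max x0 1) ^ p := by positivity
    rw [h2]
    have := mul_le_mul_of_nonneg_right h1 (show 0 ≤ ‖s‖ ^ p by positivity)
    linarith

lemma wfac_ne (ℓ : ℝ) (k : ℕ) (m : ℤ) (s : ℂ) (hs : 0 ≤ s.re) :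
    wfac (s / funnelResonance ℓ k m) ≠ 0 :=
  mul_ne_zero (pow_ne_zero _ (reson_ne_s ℓ k m s hs)) (exp_ne_zero _)

lemma G_ne (ℓ : ℝ) (hl : 0 < ℓ) (k : ℕ) (s : ℂ) (hs : 0 ≤ s.re) :
    (1 - exp (-(s + 2 * k + 1) * ℓ)) ^ 2 ≠ 0 := by
  refine pow_ne_zero _ fun h => ?_
  have h1 : exp (-(s + 2 * k + 1) * ℓ) = 1 := by linear_combination -h
  have h2 : ‖exp (-(s + 2 * k + 1) * ℓ)‖ = 1 := by rw [h1, norm_one]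
  rw [Complex.norm_exp, Real.exp_eq_one_iff] at h2
  simp at h2
  have h3 : (0 : ℝ) ≤ k := k.cast_nonneg
  rcases h2 with h2 | h2 <;> linarith

lemma icc_succ (N : ℕ) : Finset.Icc (-((N + 1 : ℕ) : ℤ)) ((N + 1 : ℕ) : ℤ) =
    insert ((N : ℤ) + 1) (insert (-((N : ℤ) + 1)) (Finset.Icc (-(N : ℤ)) N)) := by
  ext x
  simp
  omega

lemma prod_shift (w : ℂ) (N : ℕ) :
    ∏ m ∈ Finset.Icc (-(N : ℤ)) N, ((m : ℂ) + w) =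
      (w * ∏ j ∈ Finset.range N, (1 - w ^ 2 / ((j : ℂ) + 1) ^ 2)) *
        ∏ j ∈ Finset.range N, (-((j : ℂ) + 1) ^ 2) := by
  induction N with
  | zero => simp
  | succ N ih =>
    rw [icc_succ, Finset.prod_insert (by simp; omega), Finset.prod_insert (by simp), ih,
      Finset.prod_range_succ, Finset.prod_range_succ]
    have h : ((N : ℂ) + 1) ≠ 0 := by exact_mod_cast N.succ_ne_zero
    push_cast
    field_simp
    ring

lemma sin_form (w : ℂ) (x : ℂ) (hx : 2 * Real.pi * I * w = -x) :
    sin (Real.pi * w) ^ 2 = -(1 / 4) * exp x * (1 - exp (-x)) ^ 2 := by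
  have h1 : exp (-(Real.pi * w) * I) = exp (x / 2) := by congr 1; linear_combination -hx / 2
  have h2 : exp ((Real.pi * w) * I) = exp (-(x / 2)) := by congr 1; linear_combination hx / 2
  have h3 : exp x = exp (x / 2) ^ 2 := by rw [← exp_nat_mul]; congr 1; push_cast; ring
  rw [Complex.sin, h1, h2, exp_neg, exp_neg, h3]
  have := exp_ne_zero (x / 2)
  field_simp
  linear_combination 4 * (exp (x / 2) ^ 2 - 1) ^ 2 * I_sq

lemma fiber (ℓ : ℝ) (hl : 0 < ℓ) (k : ℕ) : ∃ a b c : ℂ, ∀ s,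
    ∏' m : ℤ, wfac (s / funnelResonance ℓ k m) =
      (1 - exp (-(s + 2 * k + 1) * ℓ)) ^ 2 * exp (a + b * s + c * s ^ 2) := by
  have hl' : (ℓ : ℂ) ≠ 0 := by exact_mod_cast hl.ne'
  have hpi : (Real.pi : ℂ) ≠ 0 := by exact_mod_cast Real.pi_ne_zero
  set w : ℂ → ℂ := fun s => I * (s + (2 * k + 1)) * ℓ / (2 * Real.pi) with hw
  have hsin : ∀ s, sin (Real.pi * w s) ^ 2 =
      -(1 / 4) * exp ((s + 2 * k + 1) * ℓ) * (1 - exp (-(s + 2 * k + 1) * ℓ)) ^ 2 := by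
    intro s
    rw [sin_form (w s) ((s + 2 * k + 1) * ℓ)]
    · rw [neg_mul (s + 2 * k + 1)]
    · simp only [hw]
      field_simp
      linear_combination (s + (2 * k + 1)) * I_sq
  have hG : ∀ s : ℂ, 0 ≤ s.re → sin (Real.pi * w s) ^ 2 ≠ 0 := by
    intro s hs
    rw [hsin]
    exact mul_ne_zero (mul_ne_zero (by norm_num) (exp_ne_zero _)) (G_ne ℓ hl k s hs)
  have hs0 : sin (Real.pi * w 0) ≠ 0 := by simpa using hG 0 (by simp)
  have hsumm : ∀ s, Summable fun m : ℤ => ‖wfac (s / funnelResonance ℓ k m) - 1‖ := fun s =>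
    (wfac_summable ℓ hl s).prod_factor k
  have hmul : ∀ s, Multipliable fun m : ℤ => wfac (s / funnelResonance ℓ k m) := fun s => by
    simpa using multipliable_one_add_of_summable (hsumm s)
  have hterm : ∀ s (m : ℤ), 1 - s / funnelResonance ℓ k m = (m + w s) / (m + w 0) := by
    intro s m
    have h1 := reson_eq ℓ hl k m s
    have h2 := reson_eq ℓ hl k m 0
    rw [sub_zero] at h2
    have h3 := reson_ne ℓ k m
    have h4 : (2 * Real.pi * I / ℓ : ℂ) ≠ 0 := by simp [hl', hpi]
    rw [one_sub_div h3, h1]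
    nth_rewrite 1 [h2]
    rw [mul_div_mul_left _ _ h4]
  have hlim : ∀ s, Tendsto (fun N : ℕ =>
      (∏ m ∈ Finset.Icc (-(N : ℤ)) N, (1 - s / funnelResonance ℓ k m)) ^ 2) atTop
      (𝓝 ((sin (Real.pi * w s) / sin (Real.pi * w 0)) ^ 2)) := by
    intro s
    refine (((Complex.tendsto_euler_sin_prod (w s)).div
      (Complex.tendsto_euler_sin_prod (w 0)) hs0).pow 2).congr fun N => ?_
    congr 1
    simp only [hterm]
    rw [Finset.prod_div_distrib, prod_shift, prod_shift, mul_div_mul_right, Pi.div_apply, mul_assoc, mul_assoc,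
      mul_div_mul_left _ _ hpi]
    rw [Finset.prod_ne_zero_iff]
    intro j _
    have h : ((j : ℂ) + 1) ≠ 0 := by exact_mod_cast j.succ_ne_zero
    simp [h]
  obtain ⟨a, b, c, habc⟩ := soft_main (fun _ => 0)
    (fun N => ∑ m ∈ Finset.Icc (-(N : ℤ)) N, 2 / funnelResonance ℓ k m)
    (fun N => ∑ m ∈ Finset.Icc (-(N : ℤ)) N, 1 / funnelResonance ℓ k m ^ 2)
    (fun N s => (∏ m ∈ Finset.Icc (-(N : ℤ)) N, (1 - s / funnelResonance ℓ k m)) ^ 2)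
    (fun s => (sin (Real.pi * w s) / sin (Real.pi * w 0)) ^ 2)
    (fun s => ∏' m : ℤ, wfac (s / funnelResonance ℓ k m)) hlim
    (by
      intro s
      refine ((hmul s).hasProd.comp (Finset.tendsto_Icc_neg (R := ℤ))).congr fun N => ?_
      simp only [Function.comp, wfac]
      rw [Finset.prod_mul_distrib, Finset.prod_pow, ← exp_sum]
      congr 2
      rw [zero_add, Finset.sum_mul, Finset.sum_mul, ← Finset.sum_add_distrib]
      refine Finset.sum_congr rfl fun m _ => ?_
      ring)
    (by
      intro s hs
      rw [div_pow]
      exact div_ne_zero (hG s hs) (hG 0 (by simp)))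
    (by
      intro s hs
      have := tprod_one_add_ne_zero_of_summable
        (f := fun m : ℤ => wfac (s / funnelResonance ℓ k m) - 1)
        (fun m => by simpa using wfac_ne ℓ k m s hs) (hsumm s)
      simpa using this)
  set K : ℂ := -(1 / 4) * exp ((2 * k + 1) * ℓ) / sin (Real.pi * w 0) ^ 2 with hK
  have hK0 : K ≠ 0 := div_ne_zero (mul_ne_zero (by norm_num) (exp_ne_zero _)) (hG 0 (by simp))
  refine ⟨log K + a, ℓ + b, c, fun s => ?_⟩
  rw [habc s, div_pow, hsin s]
  rw [show log K + a + (ℓ + b) * s + c * s ^ 2 = log K + s * ℓ + (a + b * s + c * s ^ 2) by ring,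
    exp_add (log K + _), exp_add (log K), exp_log hK0, hK,
    show (s + 2 * k + 1) * (ℓ : ℂ) = (2 * k + 1) * ℓ + s * ℓ by ring, exp_add ((2 * k + 1) * (ℓ : ℂ))]
  ring

lemma G_summable (ℓ : ℝ) (hl : 0 < ℓ) (s : ℂ) :
    Summable fun k : ℕ => ‖(1 - exp (-(s + 2 * k + 1) * ℓ)) ^ 2 - 1‖ := by
  set q : ℂ := exp (-2 * ℓ) with hq
  have hq1 : ‖q‖ < 1 := by
    rw [hq, Complex.norm_exp, Real.exp_lt_one_iff]
    simp; linarith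
  have hform : ∀ k : ℕ, exp (-(s + 2 * k + 1) * ℓ) = exp (-(s + 1) * ℓ) * q ^ k := by
    intro k
    rw [hq, ← exp_nat_mul, ← exp_add]; congr 1; ring
  have hA : Summable fun k : ℕ => ‖(exp (-(s + 1) * ℓ)) * q ^ k‖ := by
    simp only [norm_mul, norm_pow]
    exact (summable_geometric_of_lt_one (norm_nonneg _) hq1).mul_left _
  have hB : Summable fun k : ℕ => ‖(exp (-(s + 1) * ℓ)) ^ 2 * (q ^ 2) ^ k‖ := by
    simp only [norm_mul, norm_pow]
    refine (summable_geometric_of_lt_one (by positivity) ?_).mul_left _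
    exact pow_lt_one₀ (norm_nonneg _) hq1 (by norm_num)
  refine ((hA.mul_left 2).add hB).of_nonneg_of_le (fun _ => norm_nonneg _) fun k => ?_
  rw [hform]
  have : (1 - exp (-(s + 1) * ℓ) * q ^ k) ^ 2 - 1 =
      -(2 * (exp (-(s + 1) * ℓ) * q ^ k)) + (exp (-(s + 1) * ℓ)) ^ 2 * (q ^ 2) ^ k := by
    ring
  rw [this]
  refine (norm_add_le _ _).trans ?_
  rw [norm_neg, norm_mul 2]
  simp

lemma zeta_had (ℓ : ℝ) (hl : 0 < ℓ) : ∃ a b c : ℂ, ∀ s : ℂ,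
        funnelZeta ℓ s = Complex.exp (a + b * s + c * s ^ 2) * funnelHadamard ℓ s := by
  choose α β γ hF using fiber ℓ hl
  obtain ⟨a, b, c, habc⟩ := soft_main
    (fun N => ∑ k ∈ Finset.range N, α k) (fun N => ∑ k ∈ Finset.range N, β k)
    (fun N => ∑ k ∈ Finset.range N, γ k)
    (fun N s => ∏ k ∈ Finset.range N, (1 - exp (-(s + 2 * k + 1) * ℓ)) ^ 2)
    (fun s => ∏' k : ℕ, (1 - exp (-(s + 2 * k + 1) * ℓ)) ^ 2)
    (funnelHadamard ℓ)
    (by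
      intro s
      have := multipliable_one_add_of_summable (G_summable ℓ hl s)
      simp only [add_sub_cancel] at this
      exact this.hasProd.tendsto_prod_nat)
    (by
      intro s
      have h1 := (had_mult ℓ hl s).hasProd
      rw [← had_eq'] at h1
      have h2 := h1.prod_fiberwise (g := fun k : ℕ =>
        (1 - exp (-(s + 2 * k + 1) * ℓ)) ^ 2 * exp (α k + β k * s + γ k * s ^ 2)) (by
          intro k
          rw [← hF k s]
          have : Multipliable fun m : ℤ => wfac (s / funnelResonance ℓ k m) := by
            simpa using multipliable_one_add_of_summable ((wfac_summable ℓ hl s).prod_factor k)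
          exact this.hasProd)
      refine h2.tendsto_prod_nat.congr fun N => ?_
      rw [Finset.prod_mul_distrib, ← exp_sum, Finset.sum_add_distrib, Finset.sum_add_distrib,
        Finset.sum_mul, Finset.sum_mul])
    (by
      intro s hs
      have := tprod_one_add_ne_zero_of_summable
        (f := fun k : ℕ => (1 - exp (-(s + 2 * k + 1) * ℓ)) ^ 2 - 1)
        (fun k => by simpa only [add_sub_cancel] using G_ne ℓ hl k s hs) (G_summable ℓ hl s)
      simpa only [add_sub_cancel] using this)
    (by
      intro s hs
      have := tprod_one_add_ne_zero_of_summable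
        (f := fun q : ℕ × ℤ => wfac (s / funnelResonance ℓ q.1 q.2) - 1)
        (fun q => by simpa using wfac_ne ℓ q.1 q.2 s hs) (wfac_summable ℓ hl s)
      rw [had_eq']
      simpa using this)
  refine ⟨-a, -ℓ / 4 - b, -c, fun s => ?_⟩
  rw [habc s, funnelZeta]
  have : exp (-a + (-ℓ / 4 - b) * s + -c * s ^ 2) * exp (a + b * s + c * s ^ 2) =
      exp (-s * ℓ / 4) := by
    rw [← exp_add]; congr 1; ring
  rw [← this]
  ring

end FunnelAux

/-- Equations (2.8)–(2.10) of the paper: for `ℓ > 0`, (i) the Hadamard double product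
`P_F(s)` converges for every `s`, defines an entire function of order at most two, and
(ii) `Z_F(s) = e^{p(s)} P_F(s)` for a polynomial `p` of degree at most two. -/
theorem funnelZeta_eq_hadamard (ℓ : ℝ) (hl : 0 < ℓ) :
    (∀ s : ℂ, Multipliable (fun p : ℕ × ℤ =>
        (1 - s / funnelResonance ℓ p.1 p.2) ^ 2 *
          Complex.exp (2 * s / funnelResonance ℓ p.1 p.2
            + (s / funnelResonance ℓ p.1 p.2) ^ 2))) ∧
    (∀ s : ℂ, AnalyticAt ℂ (funnelHadamard ℓ) s) ∧
    (∀ η : ℝ, 0 < η → ∃ C : ℝ, 0 < C ∧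
        ∀ s : ℂ, ‖funnelHadamard ℓ s‖ ≤ C * Real.exp (‖s‖ ^ (2 + η))) ∧
    (∃ a b c : ℂ, ∀ s : ℂ,
        funnelZeta ℓ s = Complex.exp (a + b * s + c * s ^ 2) * funnelHadamard ℓ s) := by
  refine ⟨fun s => ?_, FunnelAux.had_analytic ℓ hl, FunnelAux.had_growth ℓ hl,
    FunnelAux.zeta_had ℓ hl⟩
  rw [FunnelAux.had_eq]
  exact FunnelAux.had_mult ℓ hl s
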